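/- arXiv:1809.05460 — 3 statements merged into one kernel-verified Lean document; each statement's English description precedes it below -/
import Mathlib

section
/- Let G ⊆ UT(n,ℝ) be a real unipotent group and let N, H be real algebraic subgroups of G such that G = N·H (every element of G is a product of an element of N and an element of H). Then μ(G) = μ(N)·μ(H) = μ(H)·μ(N), where the products are setwise products of sets of matrices over the hyperreals. -/
open Pointwise Filter

noncomputable section

/-- Square matrices of size `n` over `R`. -/
abbrev Mat (n : ℕ) (R : Type) : Type := Matrix (Fin n) (Fin n) R

/-- The set `UT(n,ℝ)` of upper triangular matrices with `1`s on the diagonal. -/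
def UTset (n : ℕ) : Set (Mat n ℝ) :=
  {A | (∀ i, A i i = 1) ∧ ∀ i j : Fin n, (j : ℕ) < (i : ℕ) → A i j = 0}

/-- The entries of a matrix, as a point of `ℝ^(n²)`. -/
def matEval {n : ℕ} (A : Mat n ℝ) : Fin n × Fin n → ℝ := fun ij => A ij.1 ij.2

/-- A real unipotent group: a subgroup of `UT(n,ℝ)` which is the common zero set in
`UT(n,ℝ)` of a family of real polynomials in the matrix entries. -/
def IsRealUnipotentGroup (n : ℕ) (G : Set (Mat n ℝ)) : Prop :=
  (∃ S : Set (MvPolynomial (Fin n × Fin n) ℝ),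
      G = {A | A ∈ UTset n ∧ ∀ p ∈ S, MvPolynomial.eval (matEval A) p = 0}) ∧
    (1 : Mat n ℝ) ∈ G ∧ (∀ a ∈ G, ∀ b ∈ G, a * b ∈ G) ∧ ∀ a ∈ G, a⁻¹ ∈ G

/-- A real algebraic subgroup of a real unipotent group `G`. -/
def IsRealAlgSubgroup (n : ℕ) (G H : Set (Mat n ℝ)) : Prop :=
  H ⊆ G ∧ IsRealUnipotentGroup n H

/-- `N` is a normal subgroup-set of `G`. -/
def IsNormalIn (n : ℕ) (G N : Set (Mat n ℝ)) : Prop :=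
  ∀ g ∈ G, ∀ x ∈ N, g * x * g⁻¹ ∈ N

/-- `Γ` is a lattice in `G`: a discrete subgroup which is cocompact, i.e. there is a
compact `K ⊆ G` with `K·Γ = G` (equivalently, `G/Γ` is compact). -/
def IsLatticeIn (n : ℕ) (G Γ : Set (Mat n ℝ)) : Prop :=
  Γ ⊆ G ∧ (1 : Mat n ℝ) ∈ Γ ∧ (∀ a ∈ Γ, ∀ b ∈ Γ, a * b ∈ Γ) ∧ (∀ a ∈ Γ, a⁻¹ ∈ Γ) ∧
    DiscreteTopology ↥Γ ∧
    ∃ K : Set (Mat n ℝ), K ⊆ G ∧ IsCompact K ∧ ∀ g ∈ G, ∃ k ∈ K, ∃ γ ∈ Γ, g = k * γ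

/-- `H` is `Γ`-rational: `Γ ∩ H` is a lattice in `H`. -/
def IsRationalFor (n : ℕ) (Γ H : Set (Mat n ℝ)) : Prop :=
  IsLatticeIn n H (Γ ∩ H)

/-- The hyperreal matrix represented by a sequence of real matrices. -/
def matOfSeq (n : ℕ) (u : ℕ → Mat n ℝ) : Mat n Hyperreal :=
  Matrix.of fun i j => Hyperreal.ofSeq fun k => u k i j

/-- The nonstandard extension `S^♯` of a set `S` of real matrices: hyperreal matrices
represented by sequences landing in `S` on a set of indices in the ultrafilter. -/
def matSharp (n : ℕ) (S : Set (Mat n ℝ)) : Set (Mat n Hyperreal) :=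
  {A | ∃ u : ℕ → Mat n ℝ, (∀ᶠ k in hyperfilter ℕ, u k ∈ S) ∧ A = matOfSeq n u}

/-- The canonical embedding of real matrices into hyperreal matrices. -/
def matCast {n : ℕ} (A : Mat n ℝ) : Mat n Hyperreal :=
  Matrix.of fun i j => (A i j : Hyperreal)

/-- `μ(G)`: elements of `G^♯` all of whose entries are infinitesimally close to the
corresponding entries of the identity matrix. -/
def muSet (n : ℕ) (G : Set (Mat n ℝ)) : Set (Mat n Hyperreal) :=
  {A | A ∈ matSharp n G ∧ ∀ i j, Hyperreal.Infinitesimal (A i j - (1 : Mat n Hyperreal) i j)}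

/-- The coset `gH` is near `α`, i.e. `α ∈ μ(G)·g·H^♯`. -/
def NearCoset (n : ℕ) (G : Set (Mat n ℝ)) (g : Mat n ℝ) (H : Set (Mat n ℝ))
    (α : Mat n Hyperreal) : Prop :=
  α ∈ muSet n G * ({matCast g} * matSharp n H)

/-- The set of standard parts of the finite elements of a set of hyperreal matrices. -/
def matStSet (n : ℕ) (A : Set (Mat n Hyperreal)) : Set (Mat n ℝ) :=
  {B | ∃ a ∈ A, ∀ i j, Hyperreal.IsSt (a i j) (B i j)}

/-- A polynomial map `ℝ^d → Mat n ℝ`. -/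
def IsPolyMapVec (d n : ℕ) (F : (Fin d → ℝ) → Mat n ℝ) : Prop :=
  ∃ P : Fin n → Fin n → MvPolynomial (Fin d) ℝ,
    ∀ x i j, F x i j = MvPolynomial.eval x (P i j)

/-- The inclusion `ℝ →+* ℝ*` as a ring homomorphism. -/
def realHyperRingHom : ℝ →+* Hyperreal where
  toFun r := (r : Hyperreal)
  map_one' := Hyperreal.coe_one
  map_mul' := Hyperreal.coe_mul
  map_zero' := Hyperreal.coe_zero
  map_add' := Hyperreal.coe_add

/-- A semialgebraic subset of matrix space: a finite union of sets defined by finitely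
many polynomial equations and finitely many strict polynomial inequalities. -/
def IsSemialgebraic (n : ℕ) (S : Set (Mat n ℝ)) : Prop :=
  ∃ (k : ℕ) (P Q : Fin k → Finset (MvPolynomial (Fin n × Fin n) ℝ)),
    S = ⋃ t : Fin k, {A | (∀ p ∈ P t, MvPolynomial.eval (matEval A) p = 0) ∧
      ∀ q ∈ Q t, 0 < MvPolynomial.eval (matEval A) q}

/-!
An element of `μ(S)` is represented by a sequence converging to `1` within `S` along the
ultrafilter, so `μ(S)` depends only on the filter `𝓝[S] 1`. It therefore suffices to show
`𝓝[G] 1 = 𝓝[N] 1 * 𝓝[H] 1`, and to lift a sequence converging along a product filter to its factors,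
which is possible because these filters are countably generated. The equality of filters is the open
mapping theorem for the transitive action of the σ-compact group `N × H` on the Baire space `G` by
left and right multiplication.
-/

open Topology

lemma exists_tendsto_eventuallyEq_comp {X Y : Type*} [Nonempty X] {f : X → Y} {L : Filter X}
    [L.IsCountablyGenerated] {l : Filter ℕ} (hl : l ≤ atTop) {u : ℕ → Y}
    (hu : Tendsto u l (map f L)) :
    ∃ p : ℕ → X, Tendsto p l L ∧ u =ᶠ[l] f ∘ p := by
  classical
  obtain ⟨V, hV⟩ := L.exists_antitone_basis
  -- Choose the `k`-th preimage in `V (m k)`, with `m k` as large as possible subject to `m k ≤ k`;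
  -- the cutoff, together with `l ≤ atTop`, makes `m` tend to infinity along `l`.
  let m (k : ℕ) : ℕ := Nat.findGreatest (fun i => u k ∈ f '' V i) k
  have hm (i : ℕ) : ∀ᶠ k in l, u k ∈ f '' V (m k) ∧ i ≤ m k := by
    have hmem : ∀ᶠ k in l, u k ∈ f '' V i := hu (image_mem_map (hV.mem i))
    filter_upwards [hmem, hl (eventually_ge_atTop i)] with k hk hik
    exact ⟨Nat.findGreatest_spec (P := fun i => u k ∈ f '' V i) hik hk,
      Nat.le_findGreatest hik hk⟩
  refine ⟨fun k => Function.invFunOn f (V (m k)) (u k),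
    hV.tendsto_right_iff.2 fun i _ => ?_, ?_⟩
  · exact (hm i).mono fun k ⟨hk, him⟩ => hV.antitone him (Function.invFunOn_mem hk)
  · exact (hm 0).mono fun k ⟨hk, _⟩ => (Function.invFunOn_eq hk).symm

lemma tendsto_mul_filter_mul {ι M : Type*} [Mul M] {l : Filter ι} {F F' : Filter M} {f g : ι → M}
    (hf : Tendsto f l F) (hg : Tendsto g l F') : Tendsto (fun i => f i * g i) l (F * F') := by
  rw [← map₂_mul, ← map_uncurry_prod]
  exact tendsto_map.comp (hf.prodMk hg)

lemma nhdsWithin_mul_nhdsWithin_le {M : Type*} [Mul M] [TopologicalSpace M] [ContinuousMul M]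
    (s t : Set M) (a b : M) : 𝓝[s] a * 𝓝[t] b ≤ 𝓝[s * t] (a * b) :=
  le_inf ((mul_le_mul' inf_le_left inf_le_left).trans (le_nhds_mul a b))
    (le_principal_iff.2 (mul_mem_mul self_mem_nhdsWithin self_mem_nhdsWithin))

lemma nhdsWithin_image_one_eq_mul {M M' : Type*} [Monoid M] [TopologicalSpace M] [Monoid M']
    [TopologicalSpace M'] {f : M →* M'} (hf : IsInducing f) {r s t : Set M}
    (h : 𝓝[r] 1 = 𝓝[s] 1 * 𝓝[t] 1) : 𝓝[f '' r] 1 = 𝓝[f '' s] 1 * 𝓝[f '' t] 1 := by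
  simpa only [Filter.map_mul, hf.map_nhdsWithin_eq, map_one] using congrArg (map f) h

section Group

variable {G : Type*} [Group G] [TopologicalSpace G] [IsTopologicalGroup G] [T2Space G]

lemma nhds_one_eq_mul_of_isSigmaCompact [BaireSpace G] {A B : Subgroup G}
    (hA : IsSigmaCompact (A : Set G)) (hB : IsSigmaCompact (B : Set G))
    (hAB : (A * B : Set G) = Set.univ) : 𝓝 (1 : G) = 𝓝[A] 1 * 𝓝[B] 1 := by
  refine le_antisymm ?_ (by simpa [hAB] using nhdsWithin_mul_nhdsWithin_le (A : Set G) B 1 1)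
  have : SigmaCompactSpace A := isSigmaCompact_iff_sigmaCompactSpace.1 hA
  have : SigmaCompactSpace B.op := isSigmaCompact_iff_sigmaCompactSpace.1 <| by
    have h := MulOpposite.opHomeomorph.isEmbedding.isSigmaCompact_iff.1 hB
    rwa [Homeomorph.image_eq_preimage_symm] at h
  let : MulAction (A × B.op) G := MulAction.prodOfSMulCommClass A B.op G
  have smul_def (p : A × B.op) (c : G) : p • c = p.1 * (c * MulOpposite.unop p.2) := rfl
  have : ContinuousSMul (A × B.op) G := ⟨by simp only [smul_def]; fun_prop⟩
  have : MulAction.IsPretransitive (A × B.op) G := by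
    refine (MulAction.isPretransitive_iff_base 1).2 fun c => ?_
    obtain ⟨a, ha, b, hb, rfl⟩ : c ∈ (A * B : Set G) := hAB ▸ Set.mem_univ c
    exact ⟨⟨⟨a, ha⟩, ⟨.op b, hb⟩⟩, by simp [smul_def]⟩
  calc 𝓝 (1 : G) ≤ map (fun p : A × B.op => p • (1 : G)) (𝓝 1) := by
        simpa using (isOpenMap_smul_of_sigmaCompact (1 : G)).nhds_le (1 : A × B.op)
    _ ≤ 𝓝[A] 1 * 𝓝[B] 1 := by
        simp only [smul_def, one_mul]
        refine tendsto_mul_filter_mul (tendsto_nhdsWithin_iff.2 ⟨?_, .of_forall fun p => p.1.2⟩)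
          (tendsto_nhdsWithin_iff.2 ⟨?_, .of_forall fun p => p.2.2⟩)
        · exact (by fun_prop : Continuous fun p : A × B.op => (p.1 : G)).tendsto' _ _ rfl
        · exact (by fun_prop : Continuous fun p : A × B.op =>
            MulOpposite.unop (p.2 : Gᵐᵒᵖ)).tendsto' _ _ rfl

lemma nhdsWithin_one_eq_mul_of_isSigmaCompact {A B C : Subgroup G} [BaireSpace C]
    (hA : IsSigmaCompact (A : Set G)) (hB : IsSigmaCompact (B : Set G))
    (hC : (C : Set G) = A * B) : 𝓝[C] (1 : G) = 𝓝[A] 1 * 𝓝[B] 1 := by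
  have hAC : A ≤ C := fun a ha => hC.ge ⟨a, ha, 1, B.one_mem, mul_one a⟩
  have hBC : B ≤ C := fun b hb => hC.ge ⟨1, A.one_mem, b, hb, one_mul b⟩
  have image_subgroupOf {D : Subgroup G} (hD : D ≤ C) :
      C.subtype '' (D.subgroupOf C : Set C) = D :=
    congrArg SetLike.coe (Subgroup.map_subgroupOf_eq_of_le hD)
  have isSigmaCompact_subgroupOf {D : Subgroup G} (hD : D ≤ C) (h : IsSigmaCompact (D : Set G)) :
      IsSigmaCompact (D.subgroupOf C : Set C) :=
    Subtype.isSigmaCompact_iff.2 ((image_subgroupOf hD).symm ▸ h)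
  have hmul : (A.subgroupOf C * B.subgroupOf C : Set C) = Set.univ := by
    refine Set.image_injective.2 C.subtype_injective ?_
    rw [Set.image_mul, image_subgroupOf hAC, image_subgroupOf hBC, ← hC]
    simp
  have hnhds := nhds_one_eq_mul_of_isSigmaCompact (isSigmaCompact_subgroupOf hAC hA)
    (isSigmaCompact_subgroupOf hBC hB) hmul
  rw [← nhdsWithin_univ] at hnhds
  have himage := nhdsWithin_image_one_eq_mul (f := C.subtype) .subtypeVal hnhds
  rw [image_subgroupOf hAC, image_subgroupOf hBC] at himage
  simpa using himage

end Group

section Matrix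

variable {m k R : Type*} [TopologicalSpace R]

instance [Finite m] [Finite k] [LocallyCompactSpace R] : LocallyCompactSpace (Matrix m k R) :=
  inferInstanceAs (LocallyCompactSpace (m → k → R))

instance [Countable m] [Countable k] [SecondCountableTopology R] :
    SecondCountableTopology (Matrix m k R) :=
  inferInstanceAs (SecondCountableTopology (m → k → R))

lemma isEmbedding_coe_generalLinearGroup {m K : Type*} [Fintype m] [DecidableEq m] [Field K]
    [TopologicalSpace K] [IsTopologicalDivisionRing K] :
    IsEmbedding (Units.val : GL m K → Matrix m m K) := by
  refine Units.isEmbedding_val_mk' (f := Inv.inv) (fun A hA => ?_) fun u =>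
    (Matrix.coe_units_inv u).symm
  refine (continuousAt_matrix_inv A ?_).continuousWithinAt
  rw [Ring.inverse_eq_inv']
  exact continuousAt_inv₀ ((Matrix.isUnit_iff_isUnit_det A).1 hA).ne_zero

end Matrix

lemma matOfSeq_mul {n : ℕ} (u v : ℕ → Mat n ℝ) :
    matOfSeq n (u * v) = matOfSeq n u * matOfSeq n v := by
  ext i j
  have entry_mul : (fun k => (u * v) k i j) = ∑ m, fun k => u k i m * v k m j := by
    ext k
    simp [Matrix.mul_apply]
  let φ : (ℕ → ℝ) →+* Hyperreal := Germ.coeRingHom (hyperfilter ℕ : Filter ℕ)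
  calc φ (fun k => (u * v) k i j) = ∑ m, φ (fun k => u k i m * v k m j) := by
        rw [entry_mul, map_sum]
    _ = (matOfSeq n u * matOfSeq n v) i j := by rw [Matrix.mul_apply]; rfl

lemma matOfSeq_congr {n : ℕ} {u v : ℕ → Mat n ℝ} (h : u =ᶠ[hyperfilter ℕ] v) :
    matOfSeq n u = matOfSeq n v :=
  Matrix.ext fun i j => Germ.coe_eq.2 (h.fun_comp fun A => A i j)

lemma infinitesimal_matOfSeq_sub_one_iff {n : ℕ} {u : ℕ → Mat n ℝ} :
    (∀ i j, Hyperreal.Infinitesimal (matOfSeq n u i j - (1 : Mat n Hyperreal) i j)) ↔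
      Tendsto u (hyperfilter ℕ) (𝓝 1) := by
  have sub_one_apply (i j : Fin n) : matOfSeq n u i j - (1 : Mat n Hyperreal) i j =
      Hyperreal.ofSeq fun k => u k i j - (1 : Mat n ℝ) i j := by
    obtain rfl | h := eq_or_ne i j
    · simp only [Matrix.one_apply_eq]; rfl
    · simp only [Matrix.one_apply_ne h]; rfl
  have tendsto_iff : Tendsto u (hyperfilter ℕ) (𝓝 1) ↔
      ∀ i j, Tendsto (fun k => u k i j) (hyperfilter ℕ) (𝓝 ((1 : Mat n ℝ) i j)) :=
    tendsto_pi_nhds.trans (forall_congr' fun i => tendsto_pi_nhds)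
  simp only [tendsto_iff, sub_one_apply, Hyperreal.Infinitesimal,
    Hyperreal.isSt_ofSeq_iff_tendsto, tendsto_sub_nhds_zero_iff]

lemma mem_muSet_iff {n : ℕ} {S : Set (Mat n ℝ)} {A : Mat n Hyperreal} :
    A ∈ muSet n S ↔ ∃ u, Tendsto u (hyperfilter ℕ) (𝓝[S] 1) ∧ A = matOfSeq n u := by
  simp only [tendsto_nhdsWithin_iff, ← infinitesimal_matOfSeq_sub_one_iff]
  constructor
  · rintro ⟨⟨u, hu, rfl⟩, h⟩
    exact ⟨u, ⟨h, hu⟩, rfl⟩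
  · rintro ⟨u, ⟨h, hu⟩, rfl⟩
    exact ⟨⟨u, hu, rfl⟩, h⟩

lemma muSet_eq_mul_of_nhdsWithin_eq_mul {n : ℕ} {R S T : Set (Mat n ℝ)}
    (h : 𝓝[R] (1 : Mat n ℝ) = 𝓝[S] 1 * 𝓝[T] 1) : muSet n R = muSet n S * muSet n T := by
  ext A
  rw [mem_muSet_iff, h]
  constructor
  · rintro ⟨u, hu, rfl⟩
    rw [← map₂_mul, ← map_uncurry_prod] at hu
    obtain ⟨p, hp, hup⟩ := exists_tendsto_eventuallyEq_comp Nat.hyperfilter_le_atTop hu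
    refine ⟨_, mem_muSet_iff.2 ⟨_, tendsto_fst.comp hp, rfl⟩,
      _, mem_muSet_iff.2 ⟨_, tendsto_snd.comp hp, rfl⟩, ?_⟩
    exact (matOfSeq_mul _ _).symm.trans (matOfSeq_congr hup.symm)
  · rintro ⟨_, hB, _, hC, rfl⟩
    obtain ⟨u, hu, rfl⟩ := mem_muSet_iff.1 hB
    obtain ⟨v, hv, rfl⟩ := mem_muSet_iff.1 hC
    exact ⟨u * v, tendsto_mul_filter_mul hu hv, (matOfSeq_mul u v).symm⟩

section Subgroup

variable {n : ℕ} {G N H : Subgroup (GL (Fin n) ℝ)}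

/-- The monad `μ(G)` of a subgroup `G` of `GL(n,ℝ)`, regarded as a set of matrices. -/
def muSubgroup (G : Subgroup (GL (Fin n) ℝ)) : Set (Mat n Hyperreal) :=
  muSet n (Units.val '' (G : Set (GL (Fin n) ℝ)))

lemma muSubgroup_eq_mul [BaireSpace G] (hN : IsSigmaCompact (N : Set (GL (Fin n) ℝ)))
    (hH : IsSigmaCompact (H : Set (GL (Fin n) ℝ))) (hNH : (G : Set (GL (Fin n) ℝ)) = N * H) :
    muSubgroup G = muSubgroup N * muSubgroup H :=
  muSet_eq_mul_of_nhdsWithin_eq_mul <|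
    nhdsWithin_image_one_eq_mul (f := Units.coeHom (Mat n ℝ))
      isEmbedding_coe_generalLinearGroup.isInducing
      (nhdsWithin_one_eq_mul_of_isSigmaCompact hN hH hNH)

theorem stmt5_general [BaireSpace G] (hN : IsSigmaCompact (N : Set (GL (Fin n) ℝ)))
    (hH : IsSigmaCompact (H : Set (GL (Fin n) ℝ))) (hNH : (G : Set (GL (Fin n) ℝ)) = N * H) :
    muSubgroup G = muSubgroup N * muSubgroup H ∧ muSubgroup G = muSubgroup H * muSubgroup N := by
  have hHN : (G : Set (GL (Fin n) ℝ)) = H * N := by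
    simpa only [mul_inv_rev, inv_coe_set] using congrArg Inv.inv hNH
  exact ⟨muSubgroup_eq_mul hN hH hNH, muSubgroup_eq_mul hH hN hHN⟩

end Subgroup

namespace IsRealUnipotentGroup

variable {n : ℕ} {G : Set (Mat n ℝ)}

protected lemma isClosed (hG : IsRealUnipotentGroup n G) : IsClosed G := by
  obtain ⟨⟨S, rfl⟩, -⟩ := hG
  have hmatEval : Continuous (matEval : Mat n ℝ → _) := by unfold matEval; fun_prop
  simp only [UTset, Set.ofPred_and, Set.ofPred_forall]
  refine .inter (.inter ?_ ?_) ?_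
  · exact isClosed_iInter fun i => isClosed_eq (by fun_prop) continuous_const
  · exact isClosed_iInter fun i => isClosed_iInter fun j => isClosed_iInter fun _ =>
      isClosed_eq (by fun_prop) continuous_const
  · exact isClosed_iInter fun p => isClosed_iInter fun _ =>
      isClosed_eq (p.continuous_eval.comp hmatEval) continuous_const

lemma isUnit_of_mem (hG : IsRealUnipotentGroup n G) {A : Mat n ℝ} (hA : A ∈ G) : IsUnit A := by
  obtain ⟨⟨S, rfl⟩, -⟩ := hG
  obtain ⟨⟨hdiag, hlower⟩, -⟩ := hA
  have hdet : A.det = 1 := by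
    rw [Matrix.det_of_isUpperTriangular fun i j hij => hlower i j hij]
    simp [hdiag]
  simp [Matrix.isUnit_iff_isUnit_det, hdet]

/-- A real unipotent group, as a subgroup of `GL(n,ℝ)`. -/
def toSubgroup (hG : IsRealUnipotentGroup n G) : Subgroup (GL (Fin n) ℝ) where
  carrier := Units.val ⁻¹' G
  one_mem' := hG.2.1
  mul_mem' ha hb := hG.2.2.1 _ ha _ hb
  inv_mem' {a} ha := by simpa using hG.2.2.2 _ ha

lemma image_coe_toSubgroup (hG : IsRealUnipotentGroup n G) :
    Units.val '' (hG.toSubgroup : Set (GL (Fin n) ℝ)) = G :=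
  Set.image_preimage_eq_of_subset fun _ hA => hG.isUnit_of_mem hA

lemma muSubgroup_toSubgroup (hG : IsRealUnipotentGroup n G) :
    muSubgroup hG.toSubgroup = muSet n G :=
  congrArg (muSet n) hG.image_coe_toSubgroup

lemma isSigmaCompact_toSubgroup (hG : IsRealUnipotentGroup n G) :
    IsSigmaCompact (hG.toSubgroup : Set (GL (Fin n) ℝ)) := by
  rw [isEmbedding_coe_generalLinearGroup.isSigmaCompact_iff, hG.image_coe_toSubgroup]
  exact isSigmaCompact_univ.of_isClosed_subset hG.isClosed (Set.subset_univ G)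

instance (hG : IsRealUnipotentGroup n G) : BaireSpace hG.toSubgroup := by
  have : IsClosedEmbedding fun u : hG.toSubgroup => ((u : GL (Fin n) ℝ) : Mat n ℝ) := by
    refine ⟨isEmbedding_coe_generalLinearGroup.comp .subtypeVal, ?_⟩
    rw [Set.range_comp']
    simpa [hG.image_coe_toSubgroup] using hG.isClosed
  have := this.locallyCompactSpace
  infer_instance

lemma coe_toSubgroup_eq_mul {N H : Set (Mat n ℝ)} (hG : IsRealUnipotentGroup n G)
    (hN : IsRealUnipotentGroup n N) (hH : IsRealUnipotentGroup n H) (hNH : G = N * H) :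
    (hG.toSubgroup : Set (GL (Fin n) ℝ)) = hN.toSubgroup * hH.toSubgroup := by
  refine Set.image_injective.2 Units.val_injective ?_
  calc Units.val '' (hG.toSubgroup : Set (GL (Fin n) ℝ))
      = Units.val '' (hN.toSubgroup : Set (GL (Fin n) ℝ)) *
          Units.val '' (hH.toSubgroup : Set (GL (Fin n) ℝ)) := by
        simp only [image_coe_toSubgroup, hNH]
    _ = Units.val '' (hN.toSubgroup * hH.toSubgroup : Set (GL (Fin n) ℝ)) :=
        (Set.image_mul (Units.coeHom (Mat n ℝ))).symm

end IsRealUnipotentGroup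

/-- if `G = N·H` then `μ(G) = μ(N)·μ(H) = μ(H)·μ(N)`. -/
theorem stmt5 {n : ℕ} (G : Set (Mat n ℝ)) (hG : IsRealUnipotentGroup n G)
    (N H : Set (Mat n ℝ)) (hN : IsRealAlgSubgroup n G N) (hH : IsRealAlgSubgroup n G H)
    (hNH : G = N * H) :
    muSet n G = muSet n N * muSet n H ∧ muSet n G = muSet n H * muSet n N := by
  simpa only [IsRealUnipotentGroup.muSubgroup_toSubgroup] using
    stmt5_general hN.2.isSigmaCompact_toSubgroup hH.2.isSigmaCompact_toSubgroup
      (hG.coe_toSubgroup_eq_mul hN.2 hH.2 hNH)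
end
end

section
/- Let G ⊆ UT(n,ℝ) be a real unipotent group and let Γ be a lattice in G. If H is a real algebraic subgroup of G with Γ ⊆ H, then H = G. -/
open Pointwise Filter

noncomputable section

/-!
A right difference `x ↦ f (x * h) - f x` lowers the degree of a polynomial in the entries of a
unitriangular matrix, provided the entry in column `j` has weight `j`. So these polynomials are
polynomial functions on `G` in Leibman's sense: finitely many differences annihilate them. A bounded
polynomial function `f` is constant: inductively all its differences are constant, whence
`k ↦ f (h ^ k)` is affine, and bounded. Let now `f` be an equation of `H` and `h ∈ H`. The
difference of `f` along `h` vanishes on `H` and has smaller degree, so by induction it vanishes on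
`G`. Hence `f` is right `H`-invariant, so bounded as `G = K * H` with `K` compact, so constant, so
zero.
-/

section PolynomialFunctions

variable {M A : Type*} [Monoid M] [AddCommGroup A]

/-- The difference operator on functions on a monoid, along right translation by `h`; the
noncommutative counterpart of `fwdDiff`. -/
def rightDiff (h : M) : (M → A) →+ (M → A) where
  toFun f x := f (x * h) - f x
  map_zero' := by ext; simp
  map_add' f g := by ext; simp only [Pi.add_apply]; abel

@[simp]
lemma rightDiff_apply (h : M) (f : M → A) (x : M) : rightDiff h f x = f (x * h) - f x := rfl

variable (M A) in
/-- Polynomial functions of degree less than `D` on a monoid, in the sense of Leibman: those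
annihilated by any `D` successive right differences. -/
def polyFunDegreeLT : ℕ → AddSubgroup (M → A)
  | 0 => ⊥
  | D + 1 => ⨅ h : M, (polyFunDegreeLT D).comap (rightDiff h)

@[simp]
lemma mem_polyFunDegreeLT_zero {f : M → A} : f ∈ polyFunDegreeLT M A 0 ↔ f = 0 :=
  AddSubgroup.mem_bot

lemma mem_polyFunDegreeLT_succ {D : ℕ} {f : M → A} :
    f ∈ polyFunDegreeLT M A (D + 1) ↔ ∀ h, rightDiff h f ∈ polyFunDegreeLT M A D := by
  simp only [polyFunDegreeLT, AddSubgroup.mem_iInf, AddSubgroup.mem_comap]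

lemma polyFunDegreeLT_mono : Monotone (polyFunDegreeLT M A) := by
  refine monotone_nat_of_le_succ fun D => ?_
  induction D with
  | zero => exact bot_le
  | succ D ih =>
    intro f hf
    rw [mem_polyFunDegreeLT_succ] at hf ⊢
    exact fun h => ih (hf h)

lemma const_mem_polyFunDegreeLT_one (a : A) : Function.const M a ∈ polyFunDegreeLT M A 1 := by
  rw [mem_polyFunDegreeLT_succ]
  intro h
  ext x
  simp

end PolynomialFunctions

section Multiplication

variable {M R : Type*} [Monoid M]

lemma rightDiff_mul [NonUnitalNonAssocRing R] (h : M) (f g : M → R) :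
    rightDiff h (f * g) = rightDiff h f * (rightDiff h g + g) + f * rightDiff h g := by
  ext x
  simp only [rightDiff_apply, Pi.mul_apply, Pi.add_apply, sub_add_cancel, sub_mul, mul_sub]
  abel

lemma mul_mem_polyFunDegreeLT [NonUnitalNonAssocRing R] {a b : ℕ} {f g : M → R}
    (hf : f ∈ polyFunDegreeLT M R a) (hg : g ∈ polyFunDegreeLT M R b) :
    f * g ∈ polyFunDegreeLT M R (a + b - 1) := by
  induction hn : a + b using Nat.strong_induction_on generalizing a b f g with | _ n ih
  subst hn
  rcases a with _ | a
  · simp [mem_polyFunDegreeLT_zero.1 hf]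
  rcases b with _ | b
  · simp [mem_polyFunDegreeLT_zero.1 hg]
  rw [show a + 1 + (b + 1) - 1 = a + b + 1 by lia, mem_polyFunDegreeLT_succ]
  intro h
  have hΔf : rightDiff h f ∈ polyFunDegreeLT M R a := mem_polyFunDegreeLT_succ.1 hf h
  have hΔg : rightDiff h g ∈ polyFunDegreeLT M R b := mem_polyFunDegreeLT_succ.1 hg h
  have hg' : rightDiff h g + g ∈ polyFunDegreeLT M R (b + 1) :=
    add_mem (polyFunDegreeLT_mono b.le_succ hΔg) hg
  rw [rightDiff_mul]
  refine add_mem ?_ ?_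
  · exact polyFunDegreeLT_mono (by lia) (ih _ (by lia) hΔf hg' rfl)
  · exact polyFunDegreeLT_mono (by lia) (ih _ (by lia) hf hΔg rfl)

lemma exists_eval_mem_polyFunDegreeLT [CommRing R] {σ : Type*} {f : σ → M → R}
    (hf : ∀ s, ∃ D, f s ∈ polyFunDegreeLT M R D) (p : MvPolynomial σ R) :
    ∃ D, (fun x => MvPolynomial.eval (f · x) p) ∈ polyFunDegreeLT M R D := by
  induction p using MvPolynomial.induction_on with
  | C a =>
    simp only [MvPolynomial.eval_C]
    exact ⟨1, const_mem_polyFunDegreeLT_one a⟩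
  | add p q hp hq =>
    obtain ⟨a, ha⟩ := hp
    obtain ⟨b, hb⟩ := hq
    simp only [map_add]
    exact ⟨max a b, add_mem (polyFunDegreeLT_mono (le_max_left a b) ha)
      (polyFunDegreeLT_mono (le_max_right a b) hb)⟩
  | mul_X p s hp =>
    obtain ⟨a, ha⟩ := hp
    obtain ⟨b, hb⟩ := hf s
    simp only [map_mul, MvPolynomial.eval_X]
    exact ⟨a + b - 1, mul_mem_polyFunDegreeLT ha hb⟩

end Multiplication

section Unitriangular

variable {ι M R : Type*} [Fintype ι] [DecidableEq ι] [Monoid M] [Ring R]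

/-- `A` is unipotent with respect to the flag in which the basis vector `i` has height `w i`: it
agrees with the identity matrix except at entries `(i, j)` with `w i < w j`. For `ι = Fin n` and
`w = Fin.val` these are the upper unitriangular matrices. -/
def IsUnitriangular (w : ι → ℕ) (A : Matrix ι ι R) : Prop :=
  ∀ i j, w j ≤ w i → A i j = (1 : Matrix ι ι R) i j

lemma IsUnitriangular.mul_apply_sub {w : ι → ℕ} {B : Matrix ι ι R} (hB : IsUnitriangular w B)
    (A : Matrix ι ι R) (i j : ι) :
    (A * B) i j - A i j = ∑ k with w k < w j, A i k * B k j := by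
  have hterm (k : ι) : A i k * (B - 1) k j = if w k < w j then A i k * B k j else 0 := by
    split_ifs with hk
    · rw [Matrix.sub_apply, Matrix.one_apply_ne (ne_of_apply_ne w hk.ne), sub_zero]
    · rw [Matrix.sub_apply, hB k j (not_lt.1 hk), sub_self, mul_zero]
  calc (A * B) i j - A i j = (A * (B - 1)) i j := by
        rw [mul_sub, mul_one, Matrix.sub_apply]
    _ = ∑ k with w k < w j, A i k * B k j := by
        rw [Matrix.mul_apply, Finset.sum_filter, Finset.sum_congr rfl fun k _ => hterm k]

lemma entry_mem_polyFunDegreeLT {w : ι → ℕ} (φ : M →* Matrix ι ι R)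
    (hφ : ∀ x, IsUnitriangular w (φ x)) (i j : ι) :
    (fun x => φ x i j) ∈ polyFunDegreeLT M R (w j + 1) := by
  induction hn : w j using Nat.strong_induction_on generalizing j with | _ n ih
  subst hn
  refine mem_polyFunDegreeLT_succ.2 fun h => ?_
  have hdiff : rightDiff h (fun x => φ x i j)
      = ∑ k with w k < w j, (fun x => φ x i k) * Function.const M (φ h k j) := by
    ext x
    simp only [rightDiff_apply, map_mul, (hφ h).mul_apply_sub, Finset.sum_apply, Pi.mul_apply,
      Function.const_apply]
  rw [hdiff]
  refine sum_mem fun k hk => ?_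
  have hkj : w k < w j := (Finset.mem_filter.1 hk).2
  exact polyFunDegreeLT_mono hkj
    (mul_mem_polyFunDegreeLT (ih _ hkj k rfl) (const_mem_polyFunDegreeLT_one _))

end Unitriangular

section Bounded

variable {M E : Type*} [Monoid M] [NormedAddCommGroup E] [NormedSpace ℝ E]

lemma eq_zero_of_forall_norm_nsmul_le {c : E} {C : ℝ} (h : ∀ k : ℕ, ‖k • c‖ ≤ C) : c = 0 := by
  by_contra hc
  obtain ⟨k, hk⟩ := Archimedean.arch (C + 1) (norm_pos_iff.2 hc)
  have := h k
  rw [RCLike.norm_nsmul ℝ] at this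
  linarith

lemma eq_apply_one_of_norm_le {D : ℕ} {f : M → E} (hf : f ∈ polyFunDegreeLT M E D) {C : ℝ}
    (hC : ∀ x, ‖f x‖ ≤ C) (x : M) : f x = f 1 := by
  induction D generalizing f C x with
  | zero => simp [mem_polyFunDegreeLT_zero.1 hf]
  | succ D ih =>
    have hconst (y : M) : f (y * x) - f y = f x - f 1 := by
      simpa using ih (mem_polyFunDegreeLT_succ.1 hf x)
        (fun y => norm_sub_le_of_le (hC (y * x)) (hC y)) y
    have haffine (k : ℕ) : f (x ^ k) - f 1 = k • (f x - f 1) := by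
      induction k with
      | zero => simp
      | succ k ihk =>
        rw [succ_nsmul, ← ihk, ← hconst (x ^ k), ← pow_succ]
        abel
    refine sub_eq_zero.1 (eq_zero_of_forall_norm_nsmul_le (C := C + C) fun k => ?_)
    rw [← haffine]
    exact norm_sub_le_of_le (hC (x ^ k)) (hC 1)

theorem eq_zero_of_eqOn_zero_of_cocompact [TopologicalSpace M] [ContinuousMul M]
    {H : Submonoid M} {K : Set M} (hK : IsCompact K) (hKH : K * (H : Set M) = Set.univ)
    {D : ℕ} {f : M → E} (hf : f ∈ polyFunDegreeLT M E D) (hcont : Continuous f)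
    (hfH : Set.EqOn f 0 H) : f = 0 := by
  induction D generalizing f with
  | zero => exact mem_polyFunDegreeLT_zero.1 hf
  | succ D ih =>
    have hinv (x : M) {h : M} (hh : h ∈ H) : f (x * h) = f x := by
      have hzero : rightDiff h f = 0 := by
        refine ih (mem_polyFunDegreeLT_succ.1 hf h)
          ((hcont.comp (continuous_mul_const h)).sub hcont) fun y hy => ?_
        rw [rightDiff_apply, hfH (mul_mem hy hh), hfH hy, Pi.zero_apply, Pi.zero_apply,
          sub_zero]
      exact sub_eq_zero.1 (congrFun hzero x)
    obtain ⟨C, hC⟩ := hK.exists_bound_of_continuousOn hcont.continuousOn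
    have hbounded (x : M) : ‖f x‖ ≤ C := by
      obtain ⟨k, hk, h, hh, rfl⟩ := Set.mem_mul.1 (hKH ▸ Set.mem_univ x)
      rw [hinv k hh]
      exact hC k hk
    ext x
    rw [eq_apply_one_of_norm_le hf hbounded x, hfH H.one_mem, Pi.zero_apply, Pi.zero_apply]

end Bounded

section Cocompact

variable {ι R : Type*} [Fintype ι] [DecidableEq ι] [NormedCommRing R] [NormedSpace ℝ R]

theorem eq_top_of_isUnitriangular_of_cocompact {M : Type*} [Monoid M] [TopologicalSpace M]
    [ContinuousMul M] {w : ι → ℕ} (φ : M →* Matrix ι ι R) (hφ : ∀ x, IsUnitriangular w (φ x))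
    (hφc : Continuous φ) {H : Submonoid M} {S : Set (MvPolynomial (ι × ι) R)}
    (hS : ∀ x, x ∈ H ↔ ∀ p ∈ S, MvPolynomial.eval (fun ij => φ x ij.1 ij.2) p = 0)
    {K : Set M} (hK : IsCompact K) (hKH : K * (H : Set M) = Set.univ) : H = ⊤ := by
  refine (Submonoid.eq_top_iff' H).2 fun x => (hS x).2 fun p hp => ?_
  obtain ⟨D, hD⟩ := exists_eval_mem_polyFunDegreeLT (f := fun (ij : ι × ι) x => φ x ij.1 ij.2)
    (fun ij => ⟨_, entry_mem_polyFunDegreeLT φ hφ ij.1 ij.2⟩) p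
  have hcont : Continuous fun x => MvPolynomial.eval (fun ij : ι × ι => φ x ij.1 ij.2) p :=
    (MvPolynomial.continuous_eval p).comp
      (continuous_pi fun ij => hφc.matrix_elem ij.1 ij.2)
  exact congrFun (eq_zero_of_eqOn_zero_of_cocompact hK hKH hD hcont
    fun h hh => (hS h).1 hh p hp) x

theorem stmt8_general {w : ι → ℕ} {G H : Submonoid (Matrix ι ι R)}
    (hG : ∀ A ∈ G, IsUnitriangular w A) (hHG : H ≤ G) {S : Set (MvPolynomial (ι × ι) R)}
    (hS : ∀ A ∈ G, A ∈ H ↔ ∀ p ∈ S, MvPolynomial.eval (fun ij => A ij.1 ij.2) p = 0)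
    {K : Set (Matrix ι ι R)} (hKG : K ⊆ G) (hK : IsCompact K)
    (hGK : (G : Set (Matrix ι ι R)) ⊆ K * (H : Set (Matrix ι ι R))) : H = G := by
  have hK' : IsCompact ((↑) ⁻¹' K : Set G) :=
    (Topology.IsInducing.subtypeVal.isCompact_preimage_iff (by simpa using hKG)).2 hK
  have hcover : ((↑) ⁻¹' K : Set G) * (H.comap G.subtype : Set G) = Set.univ := by
    refine Set.eq_univ_of_forall fun g => ?_
    obtain ⟨k, hk, h, hh, hkh⟩ := hGK g.2
    exact ⟨⟨k, hKG hk⟩, hk, ⟨h, hHG hh⟩, hh, Subtype.ext hkh⟩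
  have htop : H.comap G.subtype = ⊤ := eq_top_of_isUnitriangular_of_cocompact G.subtype
    (fun g => hG g g.2) continuous_subtype_val (fun g => hS g g.2) hK' hcover
  exact le_antisymm hHG fun g hg => (Submonoid.eq_top_iff' _).1 htop ⟨g, hg⟩

end Cocompact

lemma isUnitriangular_of_mem_UTset {n : ℕ} {A : Mat n ℝ} (hA : A ∈ UTset n) :
    IsUnitriangular Fin.val A := by
  intro i j hji
  obtain rfl | hne := eq_or_ne i j
  · rw [hA.1, Matrix.one_apply_eq]
  · rw [hA.2 i j (lt_of_le_of_ne hji (Fin.val_ne_of_ne hne.symm)), Matrix.one_apply_ne hne]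

namespace IsRealUnipotentGroup

variable {n : ℕ} {G : Set (Mat n ℝ)}

/-- The submonoid of the matrix ring underlying a real unipotent group. -/
def toSubmonoid (hG : IsRealUnipotentGroup n G) : Submonoid (Mat n ℝ) where
  carrier := G
  one_mem' := hG.2.1
  mul_mem' ha hb := hG.2.2.1 _ ha _ hb

lemma subset_UTset (hG : IsRealUnipotentGroup n G) : G ⊆ UTset n := by
  obtain ⟨⟨S, rfl⟩, -⟩ := hG
  exact fun A hA => hA.1

lemma exists_mem_iff (hG : IsRealUnipotentGroup n G) :
    ∃ S : Set (MvPolynomial (Fin n × Fin n) ℝ),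
      ∀ A ∈ UTset n, A ∈ G ↔ ∀ p ∈ S, MvPolynomial.eval (matEval A) p = 0 := by
  obtain ⟨⟨S, rfl⟩, -⟩ := hG
  exact ⟨S, fun A hA => ⟨And.right, And.intro hA⟩⟩

end IsRealUnipotentGroup

lemma IsLatticeIn.exists_isCompact {n : ℕ} {G Γ : Set (Mat n ℝ)} (hΓ : IsLatticeIn n G Γ) :
    ∃ K ⊆ G, IsCompact K ∧ G ⊆ K * Γ := by
  obtain ⟨-, -, -, -, -, K, hKG, hK, hcover⟩ := hΓ
  refine ⟨K, hKG, hK, fun g hg => ?_⟩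
  obtain ⟨k, hk, γ, hγ, rfl⟩ := hcover g hg
  exact Set.mul_mem_mul hk hγ

/-- no proper real algebraic subgroup of `G` contains a lattice of `G`. -/
theorem stmt8 {n : ℕ} (G : Set (Mat n ℝ)) (hG : IsRealUnipotentGroup n G)
    (Γ : Set (Mat n ℝ)) (hΓ : IsLatticeIn n G Γ)
    (H : Set (Mat n ℝ)) (hH : IsRealAlgSubgroup n G H) (hΓH : Γ ⊆ H) :
    H = G := by
  obtain ⟨S, hS⟩ := hH.2.exists_mem_iff
  obtain ⟨K, hKG, hK, hcover⟩ := hΓ.exists_isCompact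
  exact congrArg SetLike.coe (stmt8_general (G := hG.toSubmonoid) (H := hH.2.toSubmonoid)
    (fun A hA => isUnitriangular_of_mem_UTset (hG.subset_UTset hA)) hH.1
    (fun A hA => hS A (hG.subset_UTset hA)) hKG hK
    (hcover.trans (Set.mul_subset_mul_left hΓH)))
end
end

section
/- Let G ⊆ UT(n,ℝ) be a real unipotent group and let H ⊆ G be a real algebraic subgroup. Then there exists a closed semialgebraic set A ⊆ G such that the map f : A × H → G given by f(a,h) = a·h is a bijection and a homeomorphism (where A, H and G carry the subspace topologies from ℝ^{n²}), and moreover f and its inverse are smooth: f is the restriction of a polynomial map, and the two component maps of f⁻¹ : G → A × H are infinitely differentiable on G (they are restrictions to G of C^∞ maps, in the sense of ContDiffOn). -/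
open Pointwise Filter

noncomputable section

/-- View a matrix as a point of `ℝ^(n²)`. -/
def toVec {n : ℕ} (A : Mat n ℝ) : Fin n × Fin n → ℝ := fun ij => A ij.1 ij.2

/-- View a point of `ℝ^(n²)` as a matrix. -/
def ofVec {n : ℕ} (v : Fin n × Fin n → ℝ) : Mat n ℝ := Matrix.of fun i j => v (i, j)

/-!
Order the matrix positions by rows from the bottom up, each row from left to right. For a
unitriangular `a`, the first position at which `h` differs from `1` contributes additively to the
product `a * h`. Call a position a pivot of `H` if it is the first such position for some `h ∈ H`.
The complement `A` consists of those `a ∈ G` which agree with `1` at all pivots.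

The powers `h ^ m` of a unipotent matrix are polynomial in `m`, so a Zariski closed `H` contains the
whole curve `t ↦ h ^ t`, whose entry at the first nontrivial position is linear in `t`. Multiplying
`g` successively by such curves clears its entries at the pivots one after the other, and the
exponents needed are polynomial in `g`. Conversely, if `a` and `a * x` both lie in `A` with `x ∈ H`,
then the first position at which `x` differs from `1` cannot exist.
-/

open Polynomial

section ZariskiClosed

variable {ι R : Type*} [CommRing R]

/-- Evaluation, at the entries of `A`, of polynomials in the entries of a matrix. A polynomial map
between matrices is encoded as a matrix `Φ` of such polynomials, with value
`(evalEntries A).mapMatrix Φ` at `A`. -/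
def evalEntries (A : Matrix ι ι R) : MvPolynomial (ι × ι) R →+* R :=
  MvPolynomial.eval fun q => A q.1 q.2

/-- Zariski closed sets of matrices: the common zero sets of families of polynomials in the
matrix entries. -/
def IsZariskiClosed (V : Set (Matrix ι ι R)) : Prop :=
  ∃ S : Set (MvPolynomial (ι × ι) R), V = {A | ∀ p ∈ S, evalEntries A p = 0}

theorem isZariskiClosed_setOf_apply_eq (i j : ι) (c : R) :
    IsZariskiClosed {A : Matrix ι ι R | A i j = c} :=
  ⟨{MvPolynomial.X (i, j) - MvPolynomial.C c}, by simp [evalEntries, sub_eq_zero]⟩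

theorem isZariskiClosed_iInter {κ : Sort*} {V : κ → Set (Matrix ι ι R)}
    (hV : ∀ k, IsZariskiClosed (V k)) : IsZariskiClosed (⋂ k, V k) := by
  choose S hS using hV
  refine ⟨⋃ k, S k, ?_⟩
  ext A
  simp only [hS, Set.mem_iInter, Set.mem_ofPred_eq, Set.mem_iUnion]
  grind

theorem IsZariskiClosed.inter {V W : Set (Matrix ι ι R)} (hV : IsZariskiClosed V)
    (hW : IsZariskiClosed W) : IsZariskiClosed (V ∩ W) := by
  rw [Set.inter_eq_iInter]
  exact isZariskiClosed_iInter (Bool.rec hW hV)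

theorem evalEntries_mapMatrix_aeval [Fintype ι] [DecidableEq ι] (g : Matrix ι ι R)
    (c : MvPolynomial (ι × ι) R) (Γ : Matrix ι ι R[X]) :
    (evalEntries g).mapMatrix ((aeval c).mapMatrix Γ) =
      (evalRingHom (evalEntries g c)).mapMatrix Γ := by
  have evalEntries_comp_C : (evalEntries g).comp MvPolynomial.C = RingHom.id R := by
    ext
    simp [evalEntries]
  ext i j
  simp [aeval_def, hom_eval₂, evalEntries_comp_C, eval₂_id]

variable [IsDomain R] [CharZero R]

theorem polynomial_eq_of_eval_natCast_eq {p q : R[X]}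
    (h : ∀ m : ℕ, p.eval (m : R) = q.eval (m : R)) : p = q :=
  eq_of_infinite_eval_eq p q <|
    (Set.infinite_range_of_injective Nat.cast_injective).mono (Set.range_subset_iff.2 h)

variable [Fintype ι] [DecidableEq ι]

theorem IsZariskiClosed.curve_mem {V : Set (Matrix ι ι R)} (hV : IsZariskiClosed V)
    {Γ : Matrix ι ι R[X]} (hΓ : ∀ m : ℕ, (evalRingHom (m : R)).mapMatrix Γ ∈ V) (t : R) :
    (evalRingHom t).mapMatrix Γ ∈ V := by
  obtain ⟨S, rfl⟩ := hV
  intro p hp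
  have eval_aeval (s : R) : (MvPolynomial.aeval (fun q : ι × ι => Γ q.1 q.2) p).eval s =
      evalEntries ((evalRingHom s).mapMatrix Γ) p := by
    have eval_comp_C : (evalRingHom s).comp (algebraMap R R[X]) = RingHom.id R := by ext; simp
    rw [← coe_evalRingHom, MvPolynomial.map_aeval, eval_comp_C]
    rfl
  have aeval_eq_zero : MvPolynomial.aeval (fun q : ι × ι => Γ q.1 q.2) p = 0 :=
    polynomial_eq_of_eval_natCast_eq fun m => by rw [eval_aeval, hΓ m p hp, eval_zero]
  rw [← eval_aeval, aeval_eq_zero, eval_zero]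

end ZariskiClosed

section RealMatrices

variable {n : ℕ}

theorem IsZariskiClosed.isClosed {V : Set (Mat n ℝ)} (hV : IsZariskiClosed V) : IsClosed V := by
  obtain ⟨S, rfl⟩ := hV
  simp only [Set.ofPred_forall]
  refine isClosed_biInter fun p _ => isClosed_eq ?_ continuous_const
  exact (MvPolynomial.continuous_eval p).comp (by fun_prop)

-- Hilbert's basis theorem replaces an arbitrary family of equations by a finite one.
theorem IsZariskiClosed.isSemialgebraic {V : Set (Mat n ℝ)} (hV : IsZariskiClosed V) :
    IsSemialgebraic n V := by
  obtain ⟨S, rfl⟩ := hV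
  have forall_eq_zero_iff (U : Set (MvPolynomial (Fin n × Fin n) ℝ)) (A : Mat n ℝ) :
      (∀ p ∈ U, MvPolynomial.eval (matEval A) p = 0) ↔
        Ideal.span U ≤ RingHom.ker (MvPolynomial.eval (matEval A)) :=
    (Ideal.span_le (I := RingHom.ker (MvPolynomial.eval (matEval A)))).symm
  obtain ⟨T, hT⟩ : (Ideal.span S).FG := IsNoetherian.noetherian _
  replace hT : Ideal.span (T : Set (MvPolynomial (Fin n × Fin n) ℝ)) = Ideal.span S := hT
  refine ⟨1, fun _ => T, fun _ => ∅, ?_⟩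
  ext A
  have zeros_iff : (∀ p ∈ S, evalEntries A p = 0) ↔
      ∀ p ∈ T, MvPolynomial.eval (matEval A) p = 0 :=
    (forall_eq_zero_iff S A).trans (hT ▸ (forall_eq_zero_iff T A).symm)
  simpa using zeros_iff

theorem contDiff_toVec_evalEntries_mapMatrix (Φ : Mat n (MvPolynomial (Fin n × Fin n) ℝ))
    (k : WithTop ℕ∞) :
    ContDiff ℝ k fun v => toVec ((evalEntries (ofVec v)).mapMatrix Φ) :=
  contDiff_pi.2 fun q => (AnalyticOnNhd.eval_mvPolynomial (Φ q.1 q.2)).contDiff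

theorem exists_mvPolynomial_eval_eq_mul (n : ℕ) :
    ∃ P : Fin n → Fin n → MvPolynomial ((Fin n × Fin n) ⊕ (Fin n × Fin n)) ℝ,
      ∀ (a h : Mat n ℝ) (i j),
        (a * h) i j = MvPolynomial.eval (Sum.elim (matEval a) (matEval h)) (P i j) :=
  ⟨fun i j => ∑ k, MvPolynomial.X (Sum.inl (i, k)) * MvPolynomial.X (Sum.inr (k, j)),
    fun a h i j => by simp [Matrix.mul_apply, matEval]⟩

end RealMatrices

section Unipotent

theorem pow_eq_sum_range_choose_smul {S : Type*} [Ring S] {a : S} {d : ℕ}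
    (ha : (a - 1) ^ d = 0) (m : ℕ) :
    a ^ m = ∑ k ∈ Finset.range d, m.choose k • (a - 1) ^ k := by
  have binomial : a ^ m = ∑ k ∈ Finset.range (m + 1), m.choose k • (a - 1) ^ k := by
    conv_lhs => rw [← sub_add_cancel a 1, (Commute.one_right (a - 1)).add_pow]
    simp only [one_pow, mul_one, nsmul_eq_mul']
  rw [binomial]
  refine Finset.sum_congr_of_eq_on_inter (fun k _ hk => ?_) (fun k _ hk => ?_) fun _ _ _ => rfl
  · rw [pow_eq_zero_of_le (by simpa using hk) ha, smul_zero]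
  · rw [Nat.choose_eq_zero_of_lt (by simpa using hk), zero_smul]

variable {ι K : Type*} [Fintype ι] [DecidableEq ι] [Field K] [CharZero K]

theorem exists_polynomial_eval_natCast_eq_pow {a : Matrix ι ι K} (ha : IsNilpotent (a - 1)) :
    ∃ Γ : Matrix ι ι K[X], ∀ m : ℕ, (evalRingHom (m : K)).mapMatrix Γ = a ^ m := by
  obtain ⟨d, hd⟩ := ha
  refine ⟨∑ k ∈ Finset.range d,
    (C (k.factorial : K)⁻¹ * descPochhammer K k) • ((a - 1) ^ k).map C, fun m => ?_⟩
  rw [pow_eq_sum_range_choose_smul hd, map_sum]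
  refine Finset.sum_congr rfl fun k _ => ?_
  ext i j
  rw [← Nat.cast_smul_eq_nsmul K, Nat.cast_choose_eq_descPochhammer_div]
  simp [div_eq_inv_mul]

variable {H : Submonoid (Matrix ι ι K)}

theorem exists_oneParameter (hH : IsZariskiClosed (H : Set (Matrix ι ι K))) {h : Matrix ι ι K}
    (hh : h ∈ H) (hu : IsNilpotent (h - 1)) :
    ∃ Γ : Matrix ι ι K[X], (∀ m : ℕ, (evalRingHom (m : K)).mapMatrix Γ = h ^ m) ∧
      ∀ t, (evalRingHom t).mapMatrix Γ ∈ H := by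
  obtain ⟨Γ, hΓ⟩ := exists_polynomial_eval_natCast_eq_pow hu
  exact ⟨Γ, hΓ, hH.curve_mem fun m => by rw [hΓ]; exact pow_mem hh m⟩

-- The inverse is the value of the curve `t ↦ h ^ t` at `-1`.
theorem exists_mem_mul_eq_one (hH : IsZariskiClosed (H : Set (Matrix ι ι K))) {h : Matrix ι ι K}
    (hh : h ∈ H) (hu : IsNilpotent (h - 1)) : ∃ k ∈ H, h * k = 1 := by
  obtain ⟨Γ, hpow, hmem⟩ := exists_oneParameter hH hh hu
  have eval_C_mul (t : K) : (evalRingHom t).mapMatrix (C.mapMatrix h * Γ) =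
      h * (evalRingHom t).mapMatrix Γ := by
    rw [map_mul]
    congr 1
    ext i j
    simp
  have eval_shift (t : K) : (evalRingHom t).mapMatrix ((compRingHom (X + 1)).mapMatrix Γ) =
      (evalRingHom (t + 1)).mapMatrix Γ := by
    ext i j
    simp
  have mul_eq_shift : C.mapMatrix h * Γ = (compRingHom (X + 1)).mapMatrix Γ := by
    ext1 i j
    refine polynomial_eq_of_eval_natCast_eq fun m => ?_
    have eval_eq : (evalRingHom (m : K)).mapMatrix (C.mapMatrix h * Γ) =
        (evalRingHom (m : K)).mapMatrix ((compRingHom (X + 1)).mapMatrix Γ) := by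
      rw [eval_C_mul, eval_shift, ← Nat.cast_succ, hpow, hpow, pow_succ']
    exact congrFun₂ eval_eq i j
  refine ⟨_, hmem (-1), ?_⟩
  rw [← eval_C_mul, mul_eq_shift, eval_shift, neg_add_cancel, ← Nat.cast_zero, hpow, pow_zero]

end Unipotent

section Unitriangular

variable {ι R : Type*} [Fintype ι] [LinearOrder ι] [CommRing R]

variable (ι R) in
/-- The monoid of upper triangular matrices with `1`s on the diagonal. -/
def unitriangular : Submonoid (Matrix ι ι R) where
  carrier := {A | (∀ i, A i i = 1) ∧ A.IsUpperTriangular}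
  mul_mem' {A B} hA hB := by
    refine ⟨fun i => ?_, hA.2.mul hB.2⟩
    rw [Matrix.mul_apply, Finset.sum_eq_single i, hA.1, hB.1, one_mul]
    · intro k _ hk
      rcases lt_or_gt_of_ne hk with h | h
      · rw [hA.2 h, zero_mul]
      · rw [hB.2 h, mul_zero]
    · simp
  one_mem' := ⟨Matrix.one_apply_eq, Matrix.blockTriangular_one⟩

theorem isZariskiClosed_unitriangular :
    IsZariskiClosed (unitriangular ι R : Set (Matrix ι ι R)) := by
  have eq_inter : (unitriangular ι R : Set (Matrix ι ι R)) =
      (⋂ i, {A | A i i = 1}) ∩ ⋂ (i) (j) (_ : j < i), {A | A i j = 0} := by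
    ext A
    simp only [Set.mem_inter_iff, Set.mem_iInter]
    rfl
  rw [eq_inter]
  exact (isZariskiClosed_iInter fun _ => isZariskiClosed_setOf_apply_eq _ _ _).inter <|
    isZariskiClosed_iInter fun _ => isZariskiClosed_iInter fun _ => isZariskiClosed_iInter fun _ =>
      isZariskiClosed_setOf_apply_eq _ _ _

theorem sub_one_apply_eq_zero_of_mem_unitriangular {a : Matrix ι ι R}
    (ha : a ∈ unitriangular ι R) {i j : ι} (hji : j ≤ i) : (a - 1) i j = 0 := by
  rcases hji.eq_or_lt with rfl | hlt
  · simp [ha.1]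
  · exact (ha.2.sub Matrix.blockTriangular_one) hlt

theorem isNilpotent_sub_one_of_mem_unitriangular {a : Matrix ι ι R}
    (ha : a ∈ unitriangular ι R) : IsNilpotent (a - 1) := by
  refine ⟨Fintype.card ι, ?_⟩
  have cayley_hamilton := Matrix.aeval_self_charpoly (a - 1)
  rw [Matrix.charpoly_of_isUpperTriangular _ (ha.2.sub Matrix.blockTriangular_one)]
    at cayley_hamilton
  simpa [ha.1] using cayley_hamilton

theorem det_eq_one_of_mem_unitriangular {a : Matrix ι ι R} (ha : a ∈ unitriangular ι R) :
    a.det = 1 := by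
  rw [Matrix.det_of_isUpperTriangular ha.2, Finset.prod_eq_one fun i _ => ha.1 i]

theorem mul_adjugate_of_mem_unitriangular {a : Matrix ι ι R} (ha : a ∈ unitriangular ι R) :
    a * a.adjugate = 1 := by
  rw [Matrix.mul_adjugate, det_eq_one_of_mem_unitriangular ha, one_smul]

theorem adjugate_mem {K : Type*} [Field K] [CharZero K] {H : Submonoid (Matrix ι ι K)}
    (hH : IsZariskiClosed (H : Set (Matrix ι ι K))) (hHu : H ≤ unitriangular ι K)
    {h : Matrix ι ι K} (hh : h ∈ H) : h.adjugate ∈ H := by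
  obtain ⟨k, hk, hhk⟩ :=
    exists_mem_mul_eq_one hH hh (isNilpotent_sub_one_of_mem_unitriangular (hHu hh))
  have adjugate_mul : h.adjugate * h = 1 := by
    rw [Matrix.adjugate_mul, det_eq_one_of_mem_unitriangular (hHu hh), one_smul]
  rwa [left_inv_eq_right_inv adjugate_mul hhk]

end Unitriangular

section Coordinates

variable {ι R : Type*} [CommRing R]

/-- The entry of `A - 1` at the position `p`. A position is encoded as a pair (row, column), and
positions are ordered by rows, the last row coming first, and by columns within a row. -/
def coord [DecidableEq ι] (p : ιᵒᵈ ×ₗ ι) (A : Matrix ι ι R) : R :=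
  (A - 1) (OrderDual.ofDual (ofLex p).1) (ofLex p).2

theorem eq_one_of_forall_coord_eq_zero [DecidableEq ι] {A : Matrix ι ι R}
    (hA : ∀ p, coord p A = 0) : A = 1 := by
  ext i j
  exact sub_eq_zero.1 (hA (toLex (OrderDual.toDual i, j)))

theorem isZariskiClosed_setOf_coord_eq_zero [DecidableEq ι] (p : ιᵒᵈ ×ₗ ι) :
    IsZariskiClosed {A : Matrix ι ι R | coord p A = 0} := by
  simp only [coord, Matrix.sub_apply, sub_eq_zero]
  exact isZariskiClosed_setOf_apply_eq _ _ _

variable [Fintype ι]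

theorem coord_mapMatrix [DecidableEq ι] {S : Type*} [CommRing S] (f : R →+* S) (p : ιᵒᵈ ×ₗ ι)
    (A : Matrix ι ι R) : coord p (f.mapMatrix A) = f (coord p A) := by
  rw [coord, ← map_one f.mapMatrix, ← map_sub]
  rfl

variable [LinearOrder ι]

theorem coord_mul {a h : Matrix ι ι R} (ha : a ∈ unitriangular ι R) {p : ιᵒᵈ ×ₗ ι}
    (hh : ∀ q < p, coord q h = 0) : coord p (a * h) = coord p a + coord p h := by
  let i := OrderDual.ofDual (ofLex p).1
  let j := (ofLex p).2
  have mul_apply_eq_zero : ((a - 1) * (h - 1)) i j = 0 := by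
    rw [Matrix.mul_apply]
    refine Finset.sum_eq_zero fun k _ => ?_
    rcases le_or_gt k i with hki | hik
    · rw [sub_one_apply_eq_zero_of_mem_unitriangular ha hki, zero_mul]
    · have lower_row : toLex (OrderDual.toDual k, j) < p := Prod.Lex.lt_iff.2 (Or.inl hik)
      rw [show (h - 1) k j = 0 from hh _ lower_row, mul_zero]
  calc coord p (a * h) = ((a - 1) + (h - 1) + (a - 1) * (h - 1)) i j := by
        rw [show (a - 1) + (h - 1) + (a - 1) * (h - 1) = a * h - 1 by noncomm_ring]; rfl
    _ = coord p a + coord p h + ((a - 1) * (h - 1)) i j := rfl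
    _ = coord p a + coord p h := by rw [mul_apply_eq_zero, add_zero]

theorem coord_pow {h : Matrix ι ι R} (hu : h ∈ unitriangular ι R) {p : ιᵒᵈ ×ₗ ι}
    (hh : ∀ q < p, coord q h = 0) (m : ℕ) : coord p (h ^ m) = m * coord p h := by
  induction m with
  | zero => simp [coord]
  | succ m ih => rw [pow_succ, coord_mul (pow_mem hu m) hh, ih, Nat.cast_succ, add_one_mul]

theorem coord_oneParameter [IsDomain R] [CharZero R] {h : Matrix ι ι R}
    (hu : h ∈ unitriangular ι R) {p : ιᵒᵈ ×ₗ ι} (hh : ∀ q < p, coord q h = 0)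
    {Γ : Matrix ι ι R[X]} (hΓ : ∀ m : ℕ, (evalRingHom (m : R)).mapMatrix Γ = h ^ m) (t : R) :
    coord p ((evalRingHom t).mapMatrix Γ) = t * coord p h := by
  have coord_eq : coord p Γ = X * C (coord p h) :=
    polynomial_eq_of_eval_natCast_eq fun m => by
      rw [← coe_evalRingHom, ← coord_mapMatrix, hΓ, coord_pow hu hh, map_mul]
      simp
  rw [coord_mapMatrix, coord_eq, map_mul]
  simp

end Coordinates

section Pivots

variable {ι R K : Type*} [LinearOrder ι] [CommRing R] [Field K]

/-- A pivot of a set `H` of matrices: the first position at which some element of `H` differs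
from the identity matrix. -/
def IsPivot (H : Set (Matrix ι ι R)) (p : ιᵒᵈ ×ₗ ι) : Prop :=
  ∃ h ∈ H, (∀ q < p, coord q h = 0) ∧ coord p h ≠ 0

/-- The matrices which agree with the identity matrix at all pivots of `H`; the unitriangular ones
form a set of representatives of the left cosets of `H`. -/
def pivotComplement (H : Set (Matrix ι ι R)) : Set (Matrix ι ι R) :=
  {a | ∀ p, IsPivot H p → coord p a = 0}

theorem isZariskiClosed_pivotComplement (H : Set (Matrix ι ι R)) :
    IsZariskiClosed (pivotComplement H) := by
  simp only [pivotComplement, Set.ofPred_forall]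
  exact isZariskiClosed_iInter fun p => isZariskiClosed_iInter fun _ =>
    isZariskiClosed_setOf_coord_eq_zero p

variable [Fintype ι]

theorem eq_one_of_mul_mem_pivotComplement {H : Set (Matrix ι ι R)} {a x : Matrix ι ι R}
    (hau : a ∈ unitriangular ι R) (ha : a ∈ pivotComplement H) (hx : x ∈ H)
    (hax : a * x ∈ pivotComplement H) : x = 1 := by
  refine eq_one_of_forall_coord_eq_zero fun p => ?_
  induction p using WellFoundedLT.induction with
  | ind p ih =>
    by_contra hne
    have hp : IsPivot H p := ⟨x, hx, ih, hne⟩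
    have coord_add := coord_mul hau ih
    rw [hax p hp, ha p hp, zero_add] at coord_add
    exact hne coord_add.symm

variable [CharZero K] {H : Submonoid (Matrix ι ι K)}

theorem IsPivot.exists_curve (hH : IsZariskiClosed (H : Set (Matrix ι ι K)))
    (hHu : H ≤ unitriangular ι K) {p : ιᵒᵈ ×ₗ ι} (hp : IsPivot (H : Set (Matrix ι ι K)) p) :
    ∃ Γ : Matrix ι ι K[X], ∀ t, (evalRingHom t).mapMatrix Γ ∈ H ∧
      (∀ q < p, coord q ((evalRingHom t).mapMatrix Γ) = 0) ∧
      coord p ((evalRingHom t).mapMatrix Γ) = t := by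
  obtain ⟨h, hh, hlt, hne⟩ := hp
  obtain ⟨Γ, hpow, hmem⟩ :=
    exists_oneParameter hH hh (isNilpotent_sub_one_of_mem_unitriangular (hHu hh))
  have eval_rescale (t : K) :
      (evalRingHom t).mapMatrix ((compRingHom (C (coord p h)⁻¹ * X)).mapMatrix Γ) =
        (evalRingHom ((coord p h)⁻¹ * t)).mapMatrix Γ := by
    ext i j
    simp
  refine ⟨(compRingHom (C (coord p h)⁻¹ * X)).mapMatrix Γ, fun t => ?_⟩
  rw [eval_rescale]
  refine ⟨hmem _, fun q hq => ?_, ?_⟩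
  · rw [coord_oneParameter (hHu hh) (fun r hr => hlt r (hr.trans hq)) hpow, hlt q hq, mul_zero]
  · rw [coord_oneParameter (hHu hh) hlt hpow, mul_right_comm, inv_mul_cancel₀ hne, one_mul]

theorem IsPivot.exists_polynomial_coord_mul_eq_zero
    (hH : IsZariskiClosed (H : Set (Matrix ι ι K))) (hHu : H ≤ unitriangular ι K) {p : ιᵒᵈ ×ₗ ι}
    (hp : IsPivot (H : Set (Matrix ι ι K)) p) {κ : Matrix ι ι (MvPolynomial (ι × ι) K)}
    (hκH : ∀ g, (evalEntries g).mapMatrix κ ∈ H) :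
    ∃ κ' : Matrix ι ι (MvPolynomial (ι × ι) K), (∀ g, (evalEntries g).mapMatrix κ' ∈ H) ∧
      ∀ g ∈ unitriangular ι K, coord p (g * (evalEntries g).mapMatrix κ') = 0 ∧
        ∀ q < p, coord q (g * (evalEntries g).mapMatrix κ') =
          coord q (g * (evalEntries g).mapMatrix κ) := by
  obtain ⟨Γ, hΓ⟩ := hp.exists_curve hH hHu
  let c : MvPolynomial (ι × ι) K := -coord p (Matrix.mvPolynomialX ι ι K * κ)
  have evalEntries_c (g : Matrix ι ι K) :
      evalEntries g c = -coord p (g * (evalEntries g).mapMatrix κ) := by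
    rw [map_neg, ← coord_mapMatrix, map_mul]
    congr 3
    exact Matrix.mvPolynomialX_mapMatrix_eval g
  refine ⟨κ * (aeval c).mapMatrix Γ, fun g => ?_, fun g hg => ?_⟩ <;>
    rw [map_mul, evalEntries_mapMatrix_aeval]
  · exact mul_mem (hκH g) (hΓ _).1
  · have hgκ : g * (evalEntries g).mapMatrix κ ∈ unitriangular ι K := mul_mem hg (hHu (hκH g))
    obtain ⟨-, hlt, heq⟩ := hΓ (evalEntries g c)
    rw [← mul_assoc]
    refine ⟨?_, fun q hqp => ?_⟩
    · rw [coord_mul hgκ hlt, heq, evalEntries_c, add_neg_cancel]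
    · rw [coord_mul hgκ fun r hr => hlt r (hr.trans hqp), hlt q hqp, add_zero]

theorem exists_polynomial_mul_mem_pivotComplement
    (hH : IsZariskiClosed (H : Set (Matrix ι ι K))) (hHu : H ≤ unitriangular ι K) :
    ∃ κ : Matrix ι ι (MvPolynomial (ι × ι) K),
      (∀ g, (evalEntries g).mapMatrix κ ∈ H) ∧
      ∀ g ∈ unitriangular ι K, g * (evalEntries g).mapMatrix κ ∈ pivotComplement (H : Set _) := by
  suffices clear_pivots : ∀ s : Finset (ιᵒᵈ ×ₗ ι), ∃ κ : Matrix ι ι (MvPolynomial (ι × ι) K),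
      (∀ g, (evalEntries g).mapMatrix κ ∈ H) ∧ ∀ g ∈ unitriangular ι K, ∀ p ∈ s,
        IsPivot (H : Set (Matrix ι ι K)) p → coord p (g * (evalEntries g).mapMatrix κ) = 0 by
    obtain ⟨κ, hκH, hκ⟩ := clear_pivots Finset.univ
    exact ⟨κ, hκH, fun g hg p => hκ g hg p (Finset.mem_univ p)⟩
  intro s
  induction s using Finset.induction_on_max with
  | empty => exact ⟨1, fun g => by rw [map_one]; exact one_mem H, by simp⟩
  | insert p s hs ih =>
    obtain ⟨κ, hκH, hκ⟩ := ih
    by_cases hp : IsPivot (H : Set (Matrix ι ι K)) p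
    · obtain ⟨κ', hκ'H, hκ'⟩ := hp.exists_polynomial_coord_mul_eq_zero hH hHu hκH
      refine ⟨κ', hκ'H, fun g hg q hq hqH => ?_⟩
      rcases Finset.mem_insert.1 hq with rfl | hqs
      · exact (hκ' g hg).1
      · rw [(hκ' g hg).2 q (hs q hqs), hκ g hg q hqs hqH]
    · refine ⟨κ, hκH, fun g hg q hq hqH => hκ g hg q ?_ hqH⟩
      exact (Finset.mem_insert.1 hq).resolve_left fun h => hp (h ▸ hqH)

theorem eq_and_eq_of_mul_eq_mul (hH : IsZariskiClosed (H : Set (Matrix ι ι K)))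
    (hHu : H ≤ unitriangular ι K) {a b h k : Matrix ι ι K} (hau : a ∈ unitriangular ι K)
    (ha : a ∈ pivotComplement (H : Set (Matrix ι ι K)))
    (hb : b ∈ pivotComplement (H : Set (Matrix ι ι K))) (hh : h ∈ H) (hk : k ∈ H)
    (hmul : a * h = b * k) : a = b ∧ h = k := by
  have b_eq : a * (h * k.adjugate) = b := by
    rw [← mul_assoc, hmul, mul_assoc, mul_adjugate_of_mem_unitriangular (hHu hk), mul_one]
  have quotient_eq_one : h * k.adjugate = 1 :=
    eq_one_of_mul_mem_pivotComplement hau ha (mul_mem hh (adjugate_mem hH hHu hk)) (b_eq ▸ hb)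
  refine ⟨by rw [← b_eq, quotient_eq_one, mul_one], ?_⟩
  have adjugate_mul : k.adjugate * k = 1 := by
    rw [Matrix.adjugate_mul, det_eq_one_of_mem_unitriangular (hHu hk), one_smul]
  exact left_inv_eq_right_inv quotient_eq_one adjugate_mul

end Pivots

section RealUnipotent

variable {n : ℕ} {G : Set (Mat n ℝ)}

theorem IsRealUnipotentGroup.subset_unitriangular (hG : IsRealUnipotentGroup n G) :
    G ⊆ unitriangular (Fin n) ℝ := by
  obtain ⟨⟨S, rfl⟩, -⟩ := hG
  exact fun A hA => ⟨hA.1.1, fun i j hij => hA.1.2 i j hij⟩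

theorem IsRealUnipotentGroup.isZariskiClosed (hG : IsRealUnipotentGroup n G) :
    IsZariskiClosed G := by
  obtain ⟨⟨S, rfl⟩, -⟩ := hG
  exact isZariskiClosed_unitriangular.inter ⟨S, rfl⟩

end RealUnipotent

theorem stmt10_general {ι K : Type*} [Fintype ι] [LinearOrder ι] [Field K] [CharZero K]
    {G : Set (Matrix ι ι K)} (hG : IsZariskiClosed G) (hGu : G ⊆ unitriangular ι K)
    {H : Submonoid (Matrix ι ι K)} (hH : IsZariskiClosed (H : Set (Matrix ι ι K)))
    (hHu : H ≤ unitriangular ι K) (hGH : ∀ g ∈ G, ∀ h ∈ H, g * h ∈ G) :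
    ∃ A ⊆ G, IsZariskiClosed A ∧
      (∀ g ∈ G, ∃! p : Matrix ι ι K × Matrix ι ι K, p.1 ∈ A ∧ p.2 ∈ H ∧ g = p.1 * p.2) ∧
      ∃ Φ Ψ : Matrix ι ι (MvPolynomial (ι × ι) K), ∀ g ∈ G,
        (evalEntries g).mapMatrix Φ ∈ A ∧ (evalEntries g).mapMatrix Ψ ∈ H ∧
          g = (evalEntries g).mapMatrix Φ * (evalEntries g).mapMatrix Ψ := by
  obtain ⟨κ, hκH, hκ⟩ := exists_polynomial_mul_mem_pivotComplement hH hHu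
  have factorization : ∀ g ∈ G,
      (evalEntries g).mapMatrix (Matrix.mvPolynomialX ι ι K * κ) ∈ G ∩ pivotComplement H ∧
      (evalEntries g).mapMatrix κ.adjugate ∈ H ∧
        g = (evalEntries g).mapMatrix (Matrix.mvPolynomialX ι ι K * κ) *
          (evalEntries g).mapMatrix κ.adjugate := by
    intro g hg
    have evalEntries_generic : (evalEntries g).mapMatrix (Matrix.mvPolynomialX ι ι K) = g :=
      Matrix.mvPolynomialX_mapMatrix_eval g
    rw [map_mul, evalEntries_generic, RingHom.map_adjugate, mul_assoc,
      mul_adjugate_of_mem_unitriangular (hHu (hκH g)), mul_one]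
    exact ⟨⟨hGH g hg _ (hκH g), hκ g (hGu hg)⟩, adjugate_mem hH hHu (hκH g), rfl⟩
  refine ⟨G ∩ pivotComplement H, Set.inter_subset_left,
    hG.inter (isZariskiClosed_pivotComplement _), fun g hg => ?_, _, _, factorization⟩
  obtain ⟨hφ, hψ, hmul⟩ := factorization g hg
  refine ⟨(_, _), ⟨hφ, hψ, hmul⟩, ?_⟩
  rintro ⟨a, h⟩ ⟨ha, hh, hg_eq⟩
  exact Prod.ext_iff.2 <|
    eq_and_eq_of_mul_eq_mul hH hHu (hGu ha.1) ha.2 hφ.2 hh hψ (hg_eq.symm.trans hmul)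

/-- existence of a closed semialgebraic complement `A` to a real
algebraic subgroup `H ⊆ G`: the multiplication map `A × H → G` is a bijection, it is
the restriction of a polynomial map, and the two components of its inverse are
restrictions to `G` of `C^∞` maps (hence `(a,h) ↦ a·h` is a homeomorphism onto `G`). -/
theorem stmt10 {n : ℕ} (G : Set (Mat n ℝ)) (hG : IsRealUnipotentGroup n G)
    (H : Set (Mat n ℝ)) (hH : IsRealAlgSubgroup n G H) :
    ∃ A : Set (Mat n ℝ), A ⊆ G ∧ IsClosed A ∧ IsSemialgebraic n A ∧
      (∀ g ∈ G, ∃! p : Mat n ℝ × Mat n ℝ, p.1 ∈ A ∧ p.2 ∈ H ∧ g = p.1 * p.2) ∧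
      (∃ P : Fin n → Fin n →
          MvPolynomial ((Fin n × Fin n) ⊕ (Fin n × Fin n)) ℝ,
        ∀ a ∈ A, ∀ h ∈ H, ∀ i j,
          (a * h) i j = MvPolynomial.eval (Sum.elim (matEval a) (matEval h)) (P i j)) ∧
      ∃ φ ψ : Mat n ℝ → Mat n ℝ,
        ContDiffOn ℝ (⊤ : ℕ∞) (fun v => toVec (φ (ofVec v))) (toVec '' G) ∧
        ContDiffOn ℝ (⊤ : ℕ∞) (fun v => toVec (ψ (ofVec v))) (toVec '' G) ∧
        ∀ g ∈ G, φ g ∈ A ∧ ψ g ∈ H ∧ g = φ g * ψ g := by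
  obtain ⟨hHG, hHgrp⟩ := hH
  obtain ⟨A, hAG, hA, hunique, Φ, Ψ, hΦΨ⟩ := stmt10_general
    (H := { carrier := H, mul_mem' := fun ha hb => hHgrp.2.2.1 _ ha _ hb, one_mem' := hHgrp.2.1 })
    hG.isZariskiClosed hG.subset_unitriangular hHgrp.isZariskiClosed hHgrp.subset_unitriangular
    fun g hg h hh => hG.2.2.1 g hg h (hHG hh)
  obtain ⟨P, hP⟩ := exists_mvPolynomial_eval_eq_mul n
  exact ⟨A, hAG, hA.isClosed, hA.isSemialgebraic, hunique, ⟨P, fun a _ h _ => hP a h⟩,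
    fun g => (evalEntries g).mapMatrix Φ, fun g => (evalEntries g).mapMatrix Ψ,
    (contDiff_toVec_evalEntries_mapMatrix Φ _).contDiffOn,
    (contDiff_toVec_evalEntries_mapMatrix Ψ _).contDiffOn, hΦΨ⟩
end
end
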